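/- Let $p$ be an odd prime and $G=\mathbb{Z}/p\mathbb{Z}\times\mathbb{Z}/p\mathbb{Z}$. Then the group $\mathbb{A}_G$ is isomorphic to $\mathbb{Z}^{(p^2-1)/2}\oplus(\mathbb{Z}/p\mathbb{Z})^k$ for some natural number $k$. -/

import Mathlib

/-! ### Virtual characters of abelian groups, permutation characters, and the quotient
`R_ℂ G / E_G` with its conjugation involution. -/

/-- The additive group of virtual complex characters of an abelian group `G`
(`ℤ`-linear combinations of the irreducible characters, which for an abelian group are
exactly the homomorphisms `G → ℂˣ`), as a subgroup of the functions `G → ℂ`. -/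
noncomputable def RCa (G : Type*) [CommGroup G] : AddSubgroup (G → ℂ) :=
  AddSubgroup.closure {f | ∃ χ : G →* ℂˣ, f = fun g => (χ g : ℂ)}

/-- The permutation character of the action of `G` on `G ⧸ H`, i.e. the character of the
representation induced from the trivial character of `H`; its value at `g` is the number
of fixed cosets. -/
noncomputable def permChar {G : Type*} [Group G] (H : Subgroup G) : G → ℂ :=
  fun g => (Nat.card {x : G ⧸ H // g • x = x} : ℂ)

/-- The subgroup of `G → ℂ` generated by the characters induced from the trivial
character of subgroups of `G`. -/
noncomputable def EG (G : Type*) [Group G] : AddSubgroup (G → ℂ) :=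
  AddSubgroup.closure {f | ∃ H : Subgroup G, f = permChar H}

/-- The quotient `R_ℂ G / E_G` of the group of virtual characters. -/
abbrev RTilde (G : Type*) [CommGroup G] :=
  (RCa G) ⧸ ((EG G).addSubgroupOf (RCa G))

/-- Pointwise complex conjugation of functions `G → ℂ`, as an additive homomorphism. -/
def conjFun (G : Type*) : (G → ℂ) →+ (G → ℂ) where
  toFun f := fun g => starRingEnd ℂ (f g)
  map_zero' := by funext g; simp
  map_add' f₁ f₂ := by funext g; simp

lemma conjFun_RCa_le (G : Type*) [CommGroup G] : (RCa G).map (conjFun G) ≤ RCa G := by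
  rw [RCa, AddMonoidHom.map_closure, AddSubgroup.closure_le]
  rintro _ ⟨f, ⟨χ, rfl⟩, rfl⟩
  apply AddSubgroup.subset_closure
  refine ⟨(Units.map ((starRingEnd ℂ) : ℂ →* ℂ)).comp χ, ?_⟩
  funext g
  simp [conjFun]

lemma conjFun_EG_le (G : Type*) [Group G] : (EG G).map (conjFun G) ≤ EG G := by
  rw [EG, AddMonoidHom.map_closure, AddSubgroup.closure_le]
  rintro _ ⟨f, ⟨H, rfl⟩, rfl⟩
  apply AddSubgroup.subset_closure
  refine ⟨H, ?_⟩
  funext g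
  simp [conjFun, permChar]

/-- The involution of `R_ℂ G / E_G` induced by complex conjugation of characters. -/
noncomputable def conjQ (G : Type*) [CommGroup G] : RTilde G →+ RTilde G :=
  QuotientAddGroup.map _ _
    (((conjFun G).comp (RCa G).subtype).codRestrict (RCa G)
      (fun x => conjFun_RCa_le G (AddSubgroup.mem_map_of_mem _ x.2)))
    (by
      intro x hx
      rw [AddSubgroup.mem_addSubgroupOf] at hx
      rw [AddSubgroup.mem_comap, AddSubgroup.mem_addSubgroupOf]
      exact conjFun_EG_le G (AddSubgroup.mem_map_of_mem _ hx))

/-- The subgroup `𝔸_G = {a ∈ R_ℂ G / E_G : a + ā = 0}`. -/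
noncomputable def AG (G : Type*) [CommGroup G] : AddSubgroup (RTilde G) :=
  (AddMonoidHom.id (RTilde G) + conjQ G).ker

lemma mem_AG_iff {G : Type*} [CommGroup G] (a : RTilde G) :
    a ∈ AG G ↔ a + conjQ G a = 0 := Iff.rfl

/-!
Write `Ĝ` for the dual group of a finite abelian group `G`. The permutation character of `G ⧸ H` is
the sum of the characters in the annihilator of `H`, every subgroup of `Ĝ` is such an annihilator,
and the indicators of the sets `Set.Iic K` generate all integer functions on the finite poset of
subgroups. So a virtual character lies in `EG G` exactly when its multiplicity at `χ` depends only
on the cyclic group `⟨χ⟩`; in particular `2f ∈ EG G` forces `f ∈ EG G`.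

Let `L` be the group of virtual characters negated by conjugation. Conjugation fixes `EG G`
pointwise, so `L → 𝔸_G` is injective, and `[f] ↦ f - conj f` embeds `𝔸_G` into `L` because `EG G` is
saturated at `2`. Hence `𝔸_G` and `L` are free of the same rank, the number of pairs `{χ, χ⁻¹}`
with `χ⁻¹ ≠ χ`.
-/

section AntiInvariants

variable {M A : Type*} [AddCommGroup M] [AddCommGroup A]

/-- The subgroup of elements sent to their negatives by `σ`; thus `AG G` is
`antiInvariants (conjQ G)`. -/
def antiInvariants (σ : M →+ M) : AddSubgroup M :=
  (AddMonoidHom.id M + σ).ker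

lemma mem_antiInvariants {σ : M →+ M} {m : M} : m ∈ antiInvariants σ ↔ m + σ m = 0 := Iff.rfl

lemma mem_antiInvariants_iff_apply_eq_neg {σ : M →+ M} {m : M} :
    m ∈ antiInvariants σ ↔ σ m = -m := by
  rw [mem_antiInvariants, add_eq_zero_iff_eq_neg']

/-- An additive equivalence intertwining `σ` and `ρ` identifies their anti-invariants. -/
def antiInvariantsCongr {σ : M →+ M} {ρ : A →+ A} (e : M ≃+ A)
    (he : ∀ m, e (σ m) = ρ (e m)) : antiInvariants σ ≃+ antiInvariants ρ :=
  (e.addSubgroupMap _).trans <| AddEquiv.addSubgroupCongr <| by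
    ext a
    obtain ⟨m, rfl⟩ := e.surjective a
    simp [mem_antiInvariants, ← he, ← map_add]

lemma exists_injective_antiInvariants_quotient [IsAddTorsionFree M] {σ : M →+ M}
    {N : AddSubgroup M} (hfix : ∀ n ∈ N, σ n = n) {τ : M ⧸ N →+ M ⧸ N}
    (hτ : ∀ m : M, τ m = σ m) :
    ∃ f : antiInvariants σ →+ antiInvariants τ, Function.Injective f := by
  refine ⟨((QuotientAddGroup.mk' N).comp (antiInvariants σ).subtype).codRestrict _ ?_, ?_⟩
  · intro m
    simp [mem_antiInvariants, hτ, mem_antiInvariants_iff_apply_eq_neg.1 m.2]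
  · rw [injective_iff_map_eq_zero]
    intro m hm
    have hmN : (m : M) ∈ N := (QuotientAddGroup.eq_zero_iff _).1 (congrArg Subtype.val hm)
    have hneg : (m : M) = -m := (hfix _ hmN).symm.trans (mem_antiInvariants_iff_apply_eq_neg.1 m.2)
    exact Subtype.ext (self_eq_neg.1 hneg)

-- The embedding is `[m] ↦ m - σ m`; if `m = σ m` and `m + σ m ∈ N`, then `2m ∈ N`.
lemma exists_injective_antiInvariants_of_quotient {σ : M →+ M} (hσ : Function.Involutive σ)
    {N : AddSubgroup M} (hfix : ∀ n ∈ N, σ n = n) (hsat : ∀ m, m + m ∈ N → m ∈ N)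
    {τ : M ⧸ N →+ M ⧸ N} (hτ : ∀ m : M, τ m = σ m) :
    ∃ f : antiInvariants τ →+ antiInvariants σ, Function.Injective f := by
  let δ : M ⧸ N →+ M := QuotientAddGroup.lift N (AddMonoidHom.id M - σ) fun n hn => by
    simp [hfix n hn]
  have hδ : ∀ m : M, δ m = m - σ m := fun m => rfl
  refine ⟨(δ.comp (antiInvariants τ).subtype).codRestrict _ ?_, ?_⟩
  · rintro ⟨a, -⟩
    obtain ⟨m, rfl⟩ := QuotientAddGroup.mk_surjective a
    simp [mem_antiInvariants, hδ, hσ m]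
  · rw [injective_iff_map_eq_zero]
    rintro ⟨a, ha⟩ h
    obtain ⟨m, rfl⟩ := QuotientAddGroup.mk_surjective a
    have hinv : σ m = m := (sub_eq_zero.1 (congrArg Subtype.val h)).symm
    rw [mem_antiInvariants, hτ, hinv, ← QuotientAddGroup.mk_add,
      QuotientAddGroup.eq_zero_iff] at ha
    exact Subtype.ext ((QuotientAddGroup.eq_zero_iff m).2 (hsat m ha))

lemma nonempty_addEquiv_of_injective [IsAddTorsionFree M] [Module.Finite ℤ M]
    {f : M →+ A} (hf : Function.Injective f) {g : A →+ M} (hg : Function.Injective g) :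
    Nonempty (A ≃+ M) := by
  have : Module.Finite ℤ A := Module.Finite.of_injective g.toIntLinearMap hg
  have : IsAddTorsionFree A := hg.isAddTorsionFree g
  have hrank : Module.finrank ℤ A = Module.finrank ℤ M :=
    le_antisymm (LinearMap.finrank_le_finrank_of_injective (f := g.toIntLinearMap) hg)
      (LinearMap.finrank_le_finrank_of_injective (f := f.toIntLinearMap) hf)
  exact ⟨(LinearEquiv.ofFinrankEq A M hrank).toAddEquiv⟩

theorem nonempty_antiInvariants_quotient_addEquiv [IsAddTorsionFree M] [Module.Finite ℤ M]
    {σ : M →+ M} (hσ : Function.Involutive σ) {N : AddSubgroup M} (hfix : ∀ n ∈ N, σ n = n)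
    (hsat : ∀ m, m + m ∈ N → m ∈ N) {τ : M ⧸ N →+ M ⧸ N} (hτ : ∀ m : M, τ m = σ m) :
    Nonempty (antiInvariants τ ≃+ antiInvariants σ) := by
  obtain ⟨f, hf⟩ := exists_injective_antiInvariants_quotient hfix hτ
  obtain ⟨g, hg⟩ := exists_injective_antiInvariants_of_quotient hσ hfix hsat hτ
  have : Module.Finite ℤ (antiInvariants σ) :=
    Module.Finite.of_injective (antiInvariants σ).subtype.toIntLinearMap Subtype.val_injective
  exact nonempty_addEquiv_of_injective hf hg

end AntiInvariants

section PermutedCoordinates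

variable {ι : Type*} {s : ι → ι}

lemma mem_antiInvariants_funLeft {c : ι → ℤ} :
    c ∈ antiInvariants (LinearMap.funLeft ℤ ℤ s).toAddMonoidHom ↔ ∀ i, c (s i) = -c i :=
  mem_antiInvariants_iff_apply_eq_neg.trans funext_iff

variable [LinearOrder ι]

/-- An anti-invariant function is determined by its values on the `i < s i`, one representative
of each two-element orbit of `s`, and these values are arbitrary. -/
def antiInvariantsFunLeftEquiv (hs : Function.Involutive s) :
    antiInvariants (LinearMap.funLeft ℤ ℤ s).toAddMonoidHom ≃+ ({i // i < s i} → ℤ) where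
  toFun c i := c.1 i
  map_add' _ _ := rfl
  invFun u := ⟨fun i => if h : i < s i then u ⟨i, h⟩ else
      if h : s i < i then -u ⟨s i, by rwa [hs i]⟩ else 0,
    mem_antiInvariants_funLeft.2 fun i => by
      rcases lt_trichotomy i (s i) with h | h | h
      · simp [hs i, h, h.not_gt]
      · simp [← h]
      · simp [hs i, h, h.not_gt]⟩
  left_inv c := by
    have hc := mem_antiInvariants_funLeft.1 c.2
    ext i
    rcases lt_trichotomy i (s i) with h | h | h
    · simp [h]
    · have hself := hc i
      rw [← h] at hself
      simp [← h, self_eq_neg.1 hself]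
    · simp [h, h.not_gt, hc i]
  right_inv u := by
    ext i
    simp [i.2]

lemma card_ne_eq_two_mul_card_lt [Finite ι] (hs : Function.Involutive s) :
    Nat.card {i // s i ≠ i} = 2 * Nat.card {i // i < s i} := by
  classical
  let e : {i // s i < i} ≃ {i // i < s i} := hs.toPerm.subtypeEquiv fun i => by simp [hs i]
  calc Nat.card {i // s i ≠ i}
      = Nat.card {i // s i < i ∨ i < s i} := by simp only [lt_or_lt_iff_ne]
    _ = Nat.card ({i // s i < i} ⊕ {i // i < s i}) :=
        Nat.card_congr <| subtypeOrEquiv _ _ <| Pi.disjoint_iff.2 fun i =>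
          Prop.disjoint_iff.2 fun h => h.1.not_gt h.2
    _ = 2 * Nat.card {i // i < s i} := by
        rw [Nat.card_sum, Nat.card_congr e, two_mul]

end PermutedCoordinates

theorem nonempty_antiInvariants_funLeft_addEquiv {ι : Type*} [Finite ι] {s : ι → ι}
    (hs : Function.Involutive s) :
    Nonempty (antiInvariants (LinearMap.funLeft ℤ ℤ s).toAddMonoidHom ≃+
      (Fin (Nat.card {i // s i ≠ i} / 2) → ℤ)) := by
  obtain ⟨_, -⟩ := exists_wellFoundedLT ι
  rw [card_ne_eq_two_mul_card_lt hs, Nat.mul_div_cancel_left _ two_pos]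
  exact ⟨(antiInvariantsFunLeftEquiv hs).trans
    (LinearEquiv.funCongrLeft ℤ ℤ (Finite.equivFin _).symm).toAddEquiv⟩

lemma closure_indicator_Iic_eq_top {P : Type*} [PartialOrder P] [Finite P] :
    AddSubgroup.closure (Set.range fun x : P => (Set.Iic x).indicator (1 : P → ℤ)) = ⊤ := by
  classical
  have := Fintype.ofFinite P
  set Γ := AddSubgroup.closure (Set.range fun x : P => (Set.Iic x).indicator (1 : P → ℤ))
  have hsingle : ∀ x, (Pi.single x 1 : P → ℤ) ∈ Γ := by
    intro x
    induction x using WellFoundedLT.induction with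
    | ind x ih =>
      have hsub : (Pi.single x 1 : P → ℤ) =
          (Set.Iic x).indicator 1 - ∑ y with y < x, Pi.single y 1 := by
        ext z
        simp only [Pi.single_apply, Pi.sub_apply, Set.indicator_apply, Set.mem_Iic, le_iff_lt_or_eq,
          Pi.one_apply, Finset.sum_apply, Finset.sum_ite_eq, Finset.mem_filter, Finset.mem_univ,
          true_and]
        grind
      rw [hsub]
      exact sub_mem (AddSubgroup.subset_closure (Set.mem_range_self x))
        (sum_mem fun y hy => ih y (Finset.mem_filter.1 hy).2)
  refine eq_top_iff.2 fun f _ => ?_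
  rw [← Finset.univ_sum_single f]
  refine sum_mem fun x _ => ?_
  simpa [← Pi.single_smul] using zsmul_mem (hsingle x) (f x)

section PermutationCharacters

variable {G : Type*} [CommGroup G] {H : Subgroup G} {g : G}

lemma smul_quotient_eq_self_iff (x : G ⧸ H) : g • x = x ↔ g ∈ H := by
  induction x using QuotientGroup.induction_on with
  | H z => rw [MulAction.Quotient.smul_coe, QuotientGroup.eq]; simp [mul_comm]

lemma permChar_apply_of_mem (hg : g ∈ H) : permChar H g = H.index := by
  simp [permChar, smul_quotient_eq_self_iff, hg, Subgroup.index]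

lemma permChar_apply_of_notMem (hg : g ∉ H) : permChar H g = 0 := by
  simp [permChar, smul_quotient_eq_self_iff, hg]

end PermutationCharacters

lemma conjFun_apply {α : Type*} (f : α → ℂ) (a : α) : conjFun α f a = starRingEnd ℂ (f a) := rfl

lemma conjFun_involutive (α : Type*) : Function.Involutive (conjFun α) := fun f => by
  ext a
  simp [conjFun_apply]

lemma conjFun_eq_self_of_mem_EG {G : Type*} [Group G] {f : G → ℂ}
    (hf : f ∈ EG G) : conjFun G f = f := by
  induction hf using AddSubgroup.closure_induction with
  | mem f hf =>
    obtain ⟨H, rfl⟩ := hf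
    ext g
    simp [conjFun_apply, permChar]
  | zero => exact map_zero _
  | add f₁ f₂ _ _ h₁ h₂ => rw [map_add, h₁, h₂]
  | neg f _ h => rw [map_neg, h]

/-- Complex conjugation on the group of virtual characters. -/
noncomputable def conjRCa (G : Type*) [CommGroup G] : RCa G →+ RCa G :=
  ((conjFun G).comp (RCa G).subtype).codRestrict (RCa G)
    fun f => conjFun_RCa_le G (AddSubgroup.mem_map_of_mem _ f.2)

lemma linearIndependent_int_monoidHom_units (G : Type*) [Monoid G] :
    LinearIndependent ℤ fun (χ : G →* ℂˣ) (g : G) => (χ g : ℂ) := by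
  have hinj : Function.Injective fun χ : G →* ℂˣ => (Units.coeHom ℂ).comp χ := fun χ ψ h => by
    ext g
    exact DFunLike.congr_fun h g
  exact ((linearIndependent_monoidHom G ℂ).comp _ hinj).restrict_scalars' ℤ

lemma conj_apply_eq_inv_apply {G : Type*} [Group G] [Finite G] (χ : G →* ℂˣ) (g : G) :
    starRingEnd ℂ (χ g : ℂ) = (χ g : ℂ)⁻¹ := by
  have hpow : (χ g : ℂ) ^ Nat.card G = 1 := by
    rw [← Units.val_pow_eq_pow_val, ← map_pow, pow_card_eq_one', map_one, Units.val_one]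
  exact (Complex.inv_eq_conj (Complex.norm_eq_one_of_pow_eq_one hpow Nat.card_pos.ne')).symm

section VirtualCharacters

attribute [local instance] Fintype.ofFinite

variable {G : Type*} [CommGroup G] [Finite G]

variable (G) in
/-- The virtual character with given multiplicities of the irreducible characters. -/
noncomputable def virtualChar : ((G →* ℂˣ) → ℤ) →ₗ[ℤ] (G → ℂ) :=
  Fintype.linearCombination ℤ fun χ g => (χ g : ℂ)

lemma virtualChar_apply (c : (G →* ℂˣ) → ℤ) (g : G) :
    virtualChar G c g = ∑ χ, (c χ : ℂ) * (χ g : ℂ) := by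
  simp [virtualChar, Fintype.linearCombination_apply]

lemma virtualChar_injective : Function.Injective (virtualChar G) :=
  (linearIndependent_int_monoidHom_units G).fintypeLinearCombination_injective

lemma range_virtualChar : (virtualChar G).toAddMonoidHom.range = RCa G := by
  have hrange := Fintype.range_linearCombination ℤ fun (χ : G →* ℂˣ) (g : G) => (χ g : ℂ)
  calc (virtualChar G).toAddMonoidHom.range
      = (LinearMap.range (virtualChar G)).toAddSubgroup := rfl
    _ = RCa G := by
        rw [virtualChar, hrange, Submodule.span_int_eq_addSubgroupClosure, RCa]
        simp only [Set.range, eq_comm]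

variable (G) in
/-- The identification of `RCa G` with the free abelian group on the irreducible characters. -/
noncomputable def virtualCharEquiv : ((G →* ℂˣ) → ℤ) ≃+ RCa G :=
  (AddMonoidHom.ofInjective (f := (virtualChar G).toAddMonoidHom) virtualChar_injective).trans
    (AddEquiv.addSubgroupCongr range_virtualChar)

lemma coe_virtualCharEquiv (c : (G →* ℂˣ) → ℤ) :
    (virtualCharEquiv G c : G → ℂ) = virtualChar G c := rfl

lemma conjFun_virtualChar (c : (G →* ℂˣ) → ℤ) :
    conjFun G (virtualChar G c) = virtualChar G (LinearMap.funLeft ℤ ℤ Inv.inv c) := by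
  ext g
  rw [conjFun_apply, virtualChar_apply, virtualChar_apply, map_sum]
  refine Fintype.sum_equiv (Equiv.inv _) _ _ fun χ => ?_
  simp [conj_apply_eq_inv_apply, LinearMap.funLeft_apply]

/-- The subgroup of irreducible characters trivial on `H`, dual to `G ⧸ H`. -/
noncomputable def charAnnihilator (H : Subgroup G) : Subgroup (G →* ℂˣ) :=
  (CommGroup.subgroupOrderIsoSubgroupMonoidHom G ℂ H).ofDual

lemma charAnnihilator_surjective : Function.Surjective (charAnnihilator (G := G)) :=
  (CommGroup.subgroupOrderIsoSubgroupMonoidHom G ℂ).surjective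

lemma mem_charAnnihilator {H : Subgroup G} {χ : G →* ℂˣ} :
    χ ∈ charAnnihilator H ↔ ∀ h ∈ H, χ h = 1 :=
  CommGroup.mem_subgroupOrderIsoSubgroupMonoidHom_iff ..

open Classical in
lemma permChar_apply_eq_sum (H : Subgroup G) (g : G) :
    permChar H g = ∑ χ with χ ∈ charAnnihilator H, (χ g : ℂ) := by
  let ev : charAnnihilator H →* ℂ :=
    (Units.coeHom ℂ).comp ((MonoidHom.eval g).comp (charAnnihilator H).subtype)
  have hev : ev = 1 ↔ g ∈ H := by
    rw [← CommGroup.forall_monoidHom_apply_eq_one_iff ℂ H g]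
    simp [ev, DFunLike.ext_iff, mem_charAnnihilator]
  have hcard : Nat.card (charAnnihilator H) = H.index :=
    CommGroup.card_subgroupOrderIsoSubgroupMonoidHom ℂ H
  symm
  calc ∑ χ with χ ∈ charAnnihilator H, (χ g : ℂ)
      = ∑ χ, ev χ := Finset.sum_subtype _ (by simp) fun χ : G →* ℂˣ => (χ g : ℂ)
    _ = if g ∈ H then (H.index : ℂ) else 0 := by
        rw [sum_hom_units, ← Nat.card_eq_fintype_card, hcard, Nat.cast_ite, Nat.cast_zero]
        simp only [hev]
    _ = permChar H g := by
        split_ifs with hg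
        · exact (permChar_apply_of_mem hg).symm
        · exact (permChar_apply_of_notMem hg).symm

lemma permChar_eq_virtualChar (H : Subgroup G) :
    permChar H = virtualChar G
      (LinearMap.funLeft ℤ ℤ Subgroup.zpowers ((Set.Iic (charAnnihilator H)).indicator 1)) := by
  classical
  ext g
  rw [permChar_apply_eq_sum, virtualChar_apply, Finset.sum_filter]
  simp [LinearMap.funLeft_apply, Set.indicator_apply]

lemma EG_eq_range_funLeft_zpowers : EG G =
    ((virtualChar G).comp (LinearMap.funLeft ℤ ℤ Subgroup.zpowers)).toAddMonoidHom.range := by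
  rw [AddMonoidHom.range_eq_map, ← closure_indicator_Iic_eq_top, AddMonoidHom.map_closure, EG,
    ← charAnnihilator_surjective.range_comp, ← Set.range_comp]
  congr 1
  ext f
  simp [permChar_eq_virtualChar, eq_comm]

lemma virtualChar_mem_EG_iff {c : (G →* ℂˣ) → ℤ} :
    virtualChar G c ∈ EG G ↔ c.FactorsThrough Subgroup.zpowers := by
  rw [Function.factorsThrough_iff, EG_eq_range_funLeft_zpowers, AddMonoidHom.mem_range]
  exact exists_congr fun d => virtualChar_injective.eq_iff.trans eq_comm

lemma mem_EG_of_add_self_mem {f : RCa G} (hf : (f : G → ℂ) + f ∈ EG G) : (f : G → ℂ) ∈ EG G := by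
  obtain ⟨c, rfl⟩ := (virtualCharEquiv G).surjective f
  rw [coe_virtualCharEquiv] at hf ⊢
  rw [← map_add, virtualChar_mem_EG_iff] at hf
  refine virtualChar_mem_EG_iff.2 fun χ ψ h => ?_
  have hdouble : c χ + c χ = c ψ + c ψ := hf h
  omega

variable (G)

theorem nonempty_AG_addEquiv_antiInvariants : Nonempty (AG G ≃+ antiInvariants (conjRCa G)) := by
  have : Module.Finite ℤ (RCa G) := Module.Finite.equiv (virtualCharEquiv G).toIntLinearEquiv
  exact nonempty_antiInvariants_quotient_addEquiv (τ := conjQ G)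
    (fun f => Subtype.ext (conjFun_involutive G f))
    (fun f hf => Subtype.ext (conjFun_eq_self_of_mem_EG hf))
    (fun f hf => mem_EG_of_add_self_mem hf) fun f => rfl

/-- On multiplicities, conjugation of virtual characters permutes the irreducible characters by
inversion. -/
noncomputable def antiInvariantsConjRCaEquiv : antiInvariants (conjRCa G) ≃+
    antiInvariants (LinearMap.funLeft ℤ ℤ (Inv.inv : (G →* ℂˣ) → (G →* ℂˣ))).toAddMonoidHom :=
  AddEquiv.symm <| antiInvariantsCongr (virtualCharEquiv G) fun c =>
    Subtype.ext (conjFun_virtualChar c).symm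

end VirtualCharacters

lemma card_dual_inv_ne_self (G : Type*) [CommGroup G] [Finite G] :
    Nat.card {χ : G →* ℂˣ // χ⁻¹ ≠ χ} = Nat.card {g : G // g⁻¹ ≠ g} := by
  obtain ⟨e⟩ := CommGroup.monoidHom_mulEquiv_of_hasEnoughRootsOfUnity G ℂ
  exact Nat.card_congr (e.toEquiv.subtypeEquiv fun χ => by simp [← map_inv])

lemma card_inv_ne_self_of_odd {G : Type*} [Group G] (hG : Odd (Nat.card G)) :
    Nat.card {g : G // g⁻¹ ≠ g} = Nat.card G - 1 := by
  have : Finite G := Nat.finite_of_card_ne_zero hG.pos.ne'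
  have hone (g : G) : g⁻¹ = g ↔ g = 1 := by
    refine ⟨fun h => ?_, fun h => by simp [h]⟩
    have hsq : g ^ 2 = 1 := by rw [pow_two, mul_eq_one_iff_inv_eq, h]
    exact (pow_eq_one_iff_of_coprime hG.coprime_two_left).1 ⟨hsq, pow_card_eq_one'⟩
  calc Nat.card {g : G // g⁻¹ ≠ g}
      = ({1}ᶜ : Set G).ncard := by simp only [ne_eq, hone]; rfl
    _ = Nat.card G - 1 := by rw [Set.ncard_compl, Set.ncard_singleton]

theorem AG_CpCp_iso_general (G : Type*) [CommGroup G] [Finite G] :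
    Nonempty (AG G ≃+ (Fin (Nat.card {g : G // g⁻¹ ≠ g} / 2) → ℤ)) := by
  obtain ⟨e₁⟩ := nonempty_AG_addEquiv_antiInvariants G
  obtain ⟨e₂⟩ := nonempty_antiInvariants_funLeft_addEquiv (inv_involutive (G := G →* ℂˣ))
  rw [card_dual_inv_ne_self] at e₂
  exact ⟨(e₁.trans (antiInvariantsConjRCaEquiv G)).trans e₂⟩

/-- For an odd prime `p` and `G = ℤ/pℤ × ℤ/pℤ`, the group `𝔸_G` is
isomorphic to `ℤ^((p²-1)/2) ⊕ (ℤ/pℤ)^k` for some natural number `k`. -/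
theorem AG_CpCp_iso (p : ℕ) (hp : p.Prime) (hodd : Odd p) :
    ∃ k : ℕ, Nonempty
      ((AG (Multiplicative (ZMod p × ZMod p)))
        ≃+ ((Fin ((p ^ 2 - 1) / 2) → ℤ) × (Fin k → ZMod p))) := by
  have : NeZero p := ⟨hp.ne_zero⟩
  have hcard : Nat.card (Multiplicative (ZMod p × ZMod p)) = p ^ 2 := by simp [pow_two]
  obtain ⟨e⟩ := AG_CpCp_iso_general (Multiplicative (ZMod p × ZMod p))
  rw [card_inv_ne_self_of_odd (hcard ▸ hodd.pow), hcard] at e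
  exact ⟨0, ⟨e.trans AddEquiv.prodUnique.symm⟩⟩
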